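/- arXiv:2406.18752 — 14 statements merged into one kernel-verified Lean document; each statement's English description precedes it below -/
import Mathlib

section
/- Let ω > 0 and set m = min(1, ω). Suppose x ∈ [0, m] and c > 0 satisfy: (i) m ≤ c·x, and (ii) for every U > 1 and every ε ∈ (0,1), (1−ε)·U ≤ c·(x + (1−x)·U). Then c ≥ 1 + m. (Interpretation: (i) is c-competitiveness on the instance consisting of the single item of unit value 1 and weight ω, where the offline optimum is m and the online algorithm accepts amount x; (ii) is c-competitiveness on the instance that additionally contains a final item of unit value U and weight 1−ε, where the offline optimum is at least (1−ε)U and the online profit is at most x + (1−x)U. Hence no online algorithm for fractional knapsack, even given the exact critical value as a prediction, has competitive ratio better than 1 + min{1, ω̂}.) -/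
/-- Lower bound for online fractional knapsack with a trusted point prediction
of the critical value: no algorithm can beat `1 + min 1 ω`. -/
theorem stmt0 (ω x c : ℝ) (hω : 0 < ω) (m : ℝ) (hm : m = min 1 ω)
    (hx0 : 0 ≤ x) (hxm : x ≤ m) (hc : 0 < c)
    (h1 : m ≤ c * x)
    (h2 : ∀ U ε : ℝ, 1 < U → 0 < ε → ε < 1 →
      (1 - ε) * U ≤ c * (x + (1 - x) * U)) :
    1 + m ≤ c := by
  by_contra hlt
  have hx1 : x ≤ 1 := hxm.trans (hm ▸ min_le_left _ _)
  have hnn : 0 ≤ c * (1 - x) := mul_nonneg hc.le (by linarith)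
  have hcx : 0 ≤ c * x := mul_nonneg hc.le hx0
  obtain ⟨d, hd⟩ : ∃ d, d = 1 - c * (1 - x) := ⟨_, rfl⟩
  have hd0 : 0 < d := by rw [hd]; linarith
  have hU : 0 ≤ 2 * (c * x) / d := by positivity
  have h := h2 (2 + 2 * (c * x) / d) (d / 2) (by linarith) (by linarith) (by linarith)
  have e : d * (2 * (c * x) / d) = 2 * (c * x) := by field_simp
  generalize 2 * (c * x) / d = V at *
  have e2 : c * (x + (1 - x) * (2 + V)) = c * x + (1 - d) * (2 + V) := by rw [hd]; ring
  rw [e2] at h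
  linarith
end

section
/- In the PP-a setup, for every i = 0, 1, …, n the cumulative accepted amount satisfies s_i = (ω̂_i + ω̃_i)/(1 + ω̂_i). In particular, if the total weight of high items satisfies ω̃_n ≤ 1, then s_n ≤ 1, i.e., the online solution of PP-a is feasible for the fractional knapsack of capacity 1. -/
open Finset

/-- In the PP-a setup, the cumulative accepted amount satisfies
`s i = (ω̂ i + ω̃ i) / (1 + ω̂ i)` for every `i ≤ n`; in particular,
if the total weight of high items is at most 1, the PP-a solution is feasible. -/
theorem stmt2 (n : ℕ) (w : ℕ → ℝ) (high : ℕ → Bool) (vhat : ℝ) (hvhat : 0 < vhat)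
    (hw : ∀ i < n, 0 ≤ w i)
    (ωhat s x ωtilde : ℕ → ℝ)
    (hω0 : ωhat 0 = 0) (hs0 : s 0 = 0)
    (hhigh : ∀ i < n, high i = true →
      ωhat (i + 1) = ωhat i ∧ x i = w i / (1 + ωhat i))
    (hcrit : ∀ i < n, high i = false →
      ωhat (i + 1) = ωhat i + min (w i) (1 - ωhat i) ∧
      x i = (1 - s i) * min (w i) (1 - ωhat i) / (1 + ωhat (i + 1)))
    (hs : ∀ i < n, s (i + 1) = s i + x i)
    (hωt : ∀ i, ωtilde i = ∑ j ∈ (Finset.range i).filter (fun j => high j = true), w j) :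
    (∀ i ≤ n, s i = (ωhat i + ωtilde i) / (1 + ωhat i)) ∧
    (ωtilde n ≤ 1 → s n ≤ 1) := by
  have key : ∀ i ≤ n, 0 ≤ ωhat i ∧ ωhat i ≤ 1 ∧
      s i * (1 + ωhat i) = ωhat i + ωtilde i := by
    intro i
    induction i with
    | zero => intro _; simp [hω0, hs0, hωt]
    | succ i ih =>
      intro hi
      have hin : i < n := hi
      obtain ⟨h0, h1, h2⟩ := ih hin.le
      have hwi := hw i hin
      have hsi := hs i hin
      cases hb : high i with
      | true =>
        obtain ⟨ha, hx⟩ := hhigh i hin hb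
        have ht : ωtilde (i + 1) = ωtilde i + w i := by
          simp [hωt, Finset.sum_filter, Finset.sum_range_succ, hb]
        have hne : 1 + ωhat i ≠ 0 := by positivity
        have hx' : x i * (1 + ωhat i) = w i := by rw [hx]; field_simp
        refine ⟨by rw [ha]; exact h0, by rw [ha]; exact h1, ?_⟩
        rw [ha, ht, hsi]
        linear_combination h2 + hx'
      | false =>
        obtain ⟨ha, hx⟩ := hcrit i hin hb
        have ht : ωtilde (i + 1) = ωtilde i := by
          simp [hωt, Finset.sum_filter, Finset.sum_range_succ, hb]
        have hm0 : 0 ≤ min (w i) (1 - ωhat i) := le_min hwi (by linarith)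
        have hm1 : min (w i) (1 - ωhat i) ≤ 1 - ωhat i := min_le_right _ _
        generalize min (w i) (1 - ωhat i) = m at *
        have hne : 1 + ωhat (i + 1) ≠ 0 := by rw [ha]; positivity
        have hx' : x i * (1 + ωhat (i + 1)) = (1 - s i) * m := by rw [hx]; field_simp
        refine ⟨by rw [ha]; linarith, by rw [ha]; linarith, ?_⟩
        rw [ht, hsi]
        linear_combination h2 + hx' + (s i - 1) * ha
  have main : ∀ i ≤ n, s i = (ωhat i + ωtilde i) / (1 + ωhat i) := by
    intro i hi
    obtain ⟨h0, _, h2⟩ := key i hi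
    rw [eq_div_iff (by positivity), h2]
  refine ⟨main, fun h => ?_⟩
  obtain ⟨h0, _, _⟩ := key n le_rfl
  rw [main n le_rfl, div_le_one (by positivity)]
  linarith
end

section
/- In the PP-a setup, for every i = 0, 1, …, n the profit collected by PP-a after processing the first i items satisfies Σ_{j ≤ i} v_j x_j ≥ ( ω̂_i·v̂ + Σ_{j ≤ i, j high} v_j w_j ) / (1 + ω̂_i), where v_j = v̂ for critical items and v_j > v̂ for high items. -/
open Finset

/-- In the PP-a setup, after processing the first `i` items, the collected
profit is at least `(ω̂ i * v̂ + Σ_{j < i, high} v j * w j) / (1 + ω̂ i)`. -/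
theorem stmt3 (n : ℕ) (w v : ℕ → ℝ) (high : ℕ → Bool) (vhat : ℝ) (hvhat : 0 < vhat)
    (hw : ∀ i < n, 0 ≤ w i)
    (hv : ∀ i < n, (high i = true → vhat < v i) ∧ (high i = false → v i = vhat))
    (ωhat s x ωtilde : ℕ → ℝ)
    (hω0 : ωhat 0 = 0) (hs0 : s 0 = 0)
    (hhigh : ∀ i < n, high i = true →
      ωhat (i + 1) = ωhat i ∧ x i = w i / (1 + ωhat i))
    (hcrit : ∀ i < n, high i = false →
      ωhat (i + 1) = ωhat i + min (w i) (1 - ωhat i) ∧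
      x i = (1 - s i) * min (w i) (1 - ωhat i) / (1 + ωhat (i + 1)))
    (hs : ∀ i < n, s (i + 1) = s i + x i)
    (hωt : ∀ i, ωtilde i = ∑ j ∈ (Finset.range i).filter (fun j => high j = true), w j) :
    ∀ i ≤ n,
      (ωhat i * vhat + ∑ j ∈ (Finset.range i).filter (fun j => high j = true), v j * w j)
          / (1 + ωhat i)
        ≤ ∑ j ∈ Finset.range i, v j * x j := by
  have key : ∀ i ≤ n, 0 ≤ ωhat i ∧ ωhat i ≤ 1 ∧
      vhat * s i ≤ ∑ j ∈ Finset.range i, v j * x j ∧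
      ωhat i * vhat + ∑ j ∈ (Finset.range i).filter (fun j => high j = true), v j * w j
        ≤ (∑ j ∈ Finset.range i, v j * x j) * (1 + ωhat i) := by
    intro i
    induction i with
    | zero => intro _; simp [hω0, hs0]
    | succ i ih =>
      intro hi
      have hi' : i < n := hi
      obtain ⟨h0, h1, h2, h3⟩ := ih hi'.le
      have hwi := hw i hi'
      have hsi := hs i hi'
      rw [Finset.sum_range_succ, Finset.range_add_one, Finset.filter_insert]
      cases hh : high i with
      | true =>
        obtain ⟨e1, e2⟩ := hhigh i hi' hh
        have hvi := (hv i hi').1 hh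
        have hx : 0 ≤ x i := by rw [e2]; positivity
        have hx2 : x i * (1 + ωhat i) = w i := by
          rw [e2]; field_simp
        rw [if_pos rfl, Finset.sum_insert (by simp), e1, hsi]
        refine ⟨h0, h1, by nlinarith, ?_⟩
        have : v i * w i = v i * x i * (1 + ωhat i) := by rw [← hx2]; ring
        linarith
      | false =>
        obtain ⟨e1, e2⟩ := hcrit i hi' hh
        have hvi := (hv i hi').2 hh
        have hm0 : 0 ≤ min (w i) (1 - ωhat i) := le_min hwi (by linarith)
        have hm1 : min (w i) (1 - ωhat i) ≤ 1 - ωhat i := min_le_right _ _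
        generalize min (w i) (1 - ωhat i) = m at *
        have hx2 : x i * (1 + ωhat (i+1)) = (1 - s i) * m := by
          have : 1 + ωhat (i+1) ≠ 0 := by rw [e1]; positivity
          rw [e2]; field_simp
        rw [e1] at hx2
        rw [if_neg (by simp), e1, hsi, hvi]
        refine ⟨by linarith, by linarith, by linarith, ?_⟩
        have h5 : vhat * x i * (1 + (ωhat i + m)) = vhat * ((1 - s i) * m) := by
          rw [← hx2]; ring
        have h6 := mul_le_mul_of_nonneg_right h2 hm0
        linarith
  intro i hi
  obtain ⟨h0, _, _, h3⟩ := key i hi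
  rw [div_le_iff₀ (by linarith)]
  exact h3
end

section
/- In the PP-a setup, assume additionally that ω̃_n ≤ 1 and that the total weight of all n items is at least 1 (equivalently, Σ_{j critical} w_j ≥ 1 − ω̃_n), so that the offline optimum equals OPT = Σ_{j high} v_j w_j + v̂·(1 − ω̃_n). Then OPT ≤ (1 + ω̂_n)·Σ_{j=1}^n v_j x_j, where ω̂_n = min(Σ_{j critical} w_j, 1) = min(1, ω̂). That is, PP-a is (1 + min{1, ω̂})-competitive for online fractional knapsack given a correct point prediction of the critical value. -/
open Finset

/-- PP-a is `(1 + min 1 ω̂)`-competitive for online fractional knapsack given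
a correct point prediction of the critical value: under the stated conditions
the offline optimum `Σ_{high} v w + v̂ (1 - ω̃ n)` is at most
`(1 + ω̂ n)` times PP-a's profit, where `ω̂ n = min (Σ_{critical} w) 1`. -/
theorem stmt4 (n : ℕ) (w v : ℕ → ℝ) (high : ℕ → Bool) (vhat : ℝ) (hvhat : 0 < vhat)
    (hw : ∀ i < n, 0 ≤ w i)
    (hv : ∀ i < n, (high i = true → vhat < v i) ∧ (high i = false → v i = vhat))
    (ωhat s x ωtilde : ℕ → ℝ)
    (hω0 : ωhat 0 = 0) (hs0 : s 0 = 0)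
    (hhigh : ∀ i < n, high i = true →
      ωhat (i + 1) = ωhat i ∧ x i = w i / (1 + ωhat i))
    (hcrit : ∀ i < n, high i = false →
      ωhat (i + 1) = ωhat i + min (w i) (1 - ωhat i) ∧
      x i = (1 - s i) * min (w i) (1 - ωhat i) / (1 + ωhat (i + 1)))
    (hs : ∀ i < n, s (i + 1) = s i + x i)
    (hωt : ∀ i, ωtilde i = ∑ j ∈ (Finset.range i).filter (fun j => high j = true), w j)
    (hhigh1 : ωtilde n ≤ 1)
    (htotal : 1 - ωtilde n ≤ ∑ j ∈ (Finset.range n).filter (fun j => high j = false), w j) :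
    ωhat n = min (∑ j ∈ (Finset.range n).filter (fun j => high j = false), w j) 1 ∧
    (∑ j ∈ (Finset.range n).filter (fun j => high j = true), v j * w j)
        + vhat * (1 - ωtilde n)
      ≤ (1 + ωhat n) * ∑ j ∈ Finset.range n, v j * x j := by
  have key : ∀ i, i ≤ n →
      0 ≤ ωhat i ∧ 0 ≤ ωtilde i ∧
      0 ≤ (∑ j ∈ (Finset.range i).filter (fun j => high j = false), w j) ∧
      ωhat i = min (∑ j ∈ (Finset.range i).filter (fun j => high j = false), w j) 1 ∧
      (1 + ωhat i) * s i = ωhat i + ωtilde i ∧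
      0 ≤ (∑ j ∈ Finset.range i, v j * x j) - vhat * s i ∧
      (∑ j ∈ (Finset.range i).filter (fun j => high j = true), v j * w j) - vhat * ωtilde i
        ≤ (1 + ωhat i) * ((∑ j ∈ Finset.range i, v j * x j) - vhat * s i) := by
    intro i
    induction i with
    | zero => intro _; simp [hω0, hs0, hωt]
    | succ k ih =>
      intro hk
      have hkn : k < n := hk
      obtain ⟨h1, h2, h3, h4, h5, h6, h7⟩ := ih hkn.le
      have hwk := hw k hkn
      have hsk := hs k hkn
      have hT := hωt (k + 1)
      have hT0 := hωt k
      simp only [Finset.range_add_one, Finset.filter_insert] at hT ⊢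
      cases hb : high k with
      | true =>
        obtain ⟨a, b⟩ := hhigh k hkn hb
        have c := (hv k hkn).1 hb
        simp only [hb, if_true, Finset.sum_insert, Finset.mem_filter, Finset.mem_range,
          lt_irrefl, false_and, not_false_eq_true, reduceCtorEq, if_false] at hT ⊢
        rw [← hT0] at hT
        have hx : (1 + ωhat k) * x k = w k := by rw [b]; field_simp
        have hx0 : 0 ≤ x k := by rw [b]; positivity
        rw [a, hsk, hT]
        refine ⟨h1, by linarith, h3, h4, by linarith, ?_, ?_⟩
        · nlinarith [mul_nonneg (sub_nonneg.2 c.le) hx0]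
        · rw [← hx]; nlinarith
      | false =>
        obtain ⟨a, b⟩ := hcrit k hkn hb
        have c := (hv k hkn).2 hb
        simp only [hb, if_true, Finset.sum_insert, Finset.mem_filter, Finset.mem_range,
          lt_irrefl, false_and, not_false_eq_true, reduceCtorEq, if_false,
          Bool.false_eq_true] at hT ⊢
        rw [← hT0] at hT
        have hle : ωhat k ≤ 1 := by rw [h4]; exact min_le_right _ _
        have hm : 0 ≤ min (w k) (1 - ωhat k) := le_min hwk (by linarith)
        have hW : 0 < 1 + ωhat (k + 1) := by linarith
        have hx : (1 + ωhat (k + 1)) * x k = (1 - s k) * min (w k) (1 - ωhat k) := by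
          rw [b]; field_simp
        have hD : v k * x k + (∑ j ∈ Finset.range k, v j * x j) - vhat * s (k + 1)
            = (∑ j ∈ Finset.range k, v j * x j) - vhat * s k := by
          rw [hsk, c]; ring
        rw [hD, hT]
        refine ⟨by linarith, h2, by linarith, ?_, ?_, h6, ?_⟩
        · rw [a]
          rcases min_cases (w k) (1 - ωhat k) with h | h <;>
          rcases min_cases (∑ j ∈ (Finset.range k).filter (fun j => high j = false), w j) 1
            with h' | h' <;>
          rcases min_cases (w k + ∑ j ∈ (Finset.range k).filter (fun j => high j = false), w j) 1
            with h'' | h'' <;> linarith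
        · rw [hsk, mul_add, hx, a]; nlinarith
        · refine h7.trans (mul_le_mul_of_nonneg_right (by linarith) h6)
  obtain ⟨h1, h2, h3, h4, h5, h6, h7⟩ := key n le_rfl
  refine ⟨h4, ?_⟩
  have h8 : 1 - ωtilde n ≤ ωhat n := by rw [h4]; exact le_min htotal (by linarith)
  have h9 : vhat * 1 ≤ vhat * ((1 + ωhat n) * s n) :=
    mul_le_mul_of_nonneg_left (by linarith) hvhat.le
  nlinarith
end

section
/- Let items i = 1,…,n have unit values v_i > 0 and weights w_i ≥ 0, let 0 < ℓ ≤ u and α > 0. Assume the critical value v̂ satisfies ℓ ≤ v̂ ≤ u, where W := Σ_{i : v_i > v̂} w_i < 1 ≤ W + Σ_{i : v_i = v̂} w_i, and OPT := Σ_{i : v_i > v̂} v_i w_i + v̂·(1 − W). Let x^A satisfy 0 ≤ x^A_i ≤ w_i for items with v_i ∈ [ℓ, u], x^A_i = 0 otherwise, Σ_i x^A_i ≤ 1, together with the α-guarantee: every allocation z with 0 ≤ z_i ≤ w_i supported on items with v_i ∈ [ℓ, u] and Σ_i z_i ≤ 1 satisfies Σ_i v_i z_i ≤ α·Σ_i v_i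 x^A_i. Then OPT ≤ α·Σ_{i : v_i ∈ [ℓ,u]} v_i x^A_i + Σ_{i : v_i > u} v_i w_i = (α+1)·( Σ_{i : v_i ∈ [ℓ,u]} v_i·(α/(α+1))·x^A_i + Σ_{i : v_i > u} v_i·w_i/(α+1) ); i.e., IPA is (α+1)-competitive. -/
open Finset

/-- (α+1)-competitiveness of IPA: with an interval prediction `[ℓ, u]`
containing the critical value and an α-competitive sub-algorithm on items
with values in `[ℓ, u]`, the offline optimum is bounded by
`α · (value of xA) + (value of items above u)`, which equals `(α+1)` times
the IPA profit. -/
theorem stmt6 (n : ℕ) (v w xA : Fin n → ℝ) (ℓ u α vhat : ℝ)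
    (hv : ∀ i, 0 < v i) (hw : ∀ i, 0 ≤ w i)
    (hℓ : 0 < ℓ) (hℓu : ℓ ≤ u) (hα : 0 < α)
    (hℓv : ℓ ≤ vhat) (hvu : vhat ≤ u)
    (W : ℝ)
    (hWdef : W = ∑ i ∈ Finset.univ.filter (fun i => vhat < v i), w i)
    (hW1 : W < 1)
    (hW2 : 1 ≤ W + ∑ i ∈ Finset.univ.filter (fun i => v i = vhat), w i)
    (OPT : ℝ)
    (hOPT : OPT = (∑ i ∈ Finset.univ.filter (fun i => vhat < v i), v i * w i)
                    + vhat * (1 - W))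
    (hxA1 : ∀ i, ℓ ≤ v i → v i ≤ u → 0 ≤ xA i ∧ xA i ≤ w i)
    (hxA2 : ∀ i, (v i < ℓ ∨ u < v i) → xA i = 0)
    (hxA3 : ∑ i, xA i ≤ 1)
    (hguar : ∀ z : Fin n → ℝ, (∀ i, 0 ≤ z i ∧ z i ≤ w i) →
      (∀ i, (v i < ℓ ∨ u < v i) → z i = 0) → (∑ i, z i ≤ 1) →
      ∑ i, v i * z i ≤ α * ∑ i, v i * xA i) :
    (OPT ≤ α * (∑ i ∈ Finset.univ.filter (fun i => ℓ ≤ v i ∧ v i ≤ u), v i * xA i)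
            + ∑ i ∈ Finset.univ.filter (fun i => u < v i), v i * w i) ∧
    (α * (∑ i ∈ Finset.univ.filter (fun i => ℓ ≤ v i ∧ v i ≤ u), v i * xA i)
        + ∑ i ∈ Finset.univ.filter (fun i => u < v i), v i * w i
      = (α + 1) *
        ((∑ i ∈ Finset.univ.filter (fun i => ℓ ≤ v i ∧ v i ≤ u),
            v i * ((α / (α + 1)) * xA i))
          + ∑ i ∈ Finset.univ.filter (fun i => u < v i), v i * (w i / (α + 1)))) := by
  have hfil : ∑ i ∈ Finset.univ.filter (fun i => ℓ ≤ v i ∧ v i ≤ u), v i * xA i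
      = ∑ i, v i * xA i := by
    rw [Finset.sum_filter]
    refine Finset.sum_congr rfl fun i _ => ?_
    split_ifs with h
    · rfl
    · have : xA i = 0 := hxA2 i (by
        by_contra hc
        push Not at hc
        exact h hc)
      simp [this]
  constructor
  · rw [hfil]
    set S := ∑ i ∈ Finset.univ.filter (fun i => v i = vhat), w i with hS
    have hSpos : 0 < S := by linarith
    obtain ⟨t, ht⟩ : ∃ t, t = (1 - W) / S := ⟨_, rfl⟩
    have htS : t * S = 1 - W := by rw [ht]; field_simp
    have ht0 : 0 ≤ t := by rw [ht]; apply div_nonneg <;> linarith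
    have ht1 : t ≤ 1 := by rw [ht, div_le_one hSpos]; linarith
    have key := hguar (fun i => (if vhat < v i ∧ v i ≤ u then w i else 0)
        + t * (if v i = vhat then w i else 0)) ?_ ?_ ?_
    · have e : OPT = ∑ i, v i * ((if vhat < v i ∧ v i ≤ u then w i else 0)
          + t * (if v i = vhat then w i else 0))
          + ∑ i ∈ Finset.univ.filter (fun i => u < v i), v i * w i := by
        have h1 : vhat * (1 - W) = ∑ i, v i * (t * (if v i = vhat then w i else 0)) := by
          rw [← htS, hS, Finset.sum_filter, Finset.mul_sum, Finset.mul_sum]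
          refine Finset.sum_congr rfl fun i _ => ?_
          split_ifs with h
          · rw [h]
          · simp
        rw [hOPT, h1, Finset.sum_filter, Finset.sum_filter, ← Finset.sum_add_distrib,
          ← Finset.sum_add_distrib]
        refine Finset.sum_congr rfl fun i _ => ?_
        by_cases a : vhat < v i <;> by_cases b : u < v i
        · simp [a, b, not_le.2 b, ne_of_gt a]
        · simp [a, b, not_lt.1 b, ne_of_gt a]
        · exact absurd (lt_of_le_of_lt hvu b) a
        · simp [a, b]
      rw [e]
      linarith
    · intro i
      have := hw i
      split_ifs with h1 h2 h2
      · exact absurd h2 (ne_of_gt h1.1)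
      · constructor <;> linarith
      · constructor <;> nlinarith
      · constructor <;> linarith
    · intro i hi
      have h1 : ¬ (vhat < v i ∧ v i ≤ u) := by
        rintro ⟨a, b⟩
        rcases hi with h | h <;> linarith
      have h2 : v i ≠ vhat := by
        intro a
        rcases hi with h | h <;> linarith
      simp [h1, h2]
    · rw [Finset.sum_add_distrib, ← Finset.mul_sum, ← Finset.sum_filter (fun i => v i = vhat),
        ← hS, htS]
      have : ∑ i, (if vhat < v i ∧ v i ≤ u then w i else 0) ≤ W := by
        rw [hWdef, Finset.sum_filter]
        refine Finset.sum_le_sum fun i _ => ?_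
        have := hw i
        by_cases a : vhat < v i <;> by_cases b : v i ≤ u <;> simp [a, b, this]
      linarith
  · have hne : α + 1 ≠ 0 := by positivity
    rw [mul_add, Finset.mul_sum, Finset.mul_sum, Finset.mul_sum]
    congr 1 <;> refine Finset.sum_congr rfl fun i _ => ?_ <;> field_simp
end

section
/- Let items i = 1,…,n have unit values v_i > 0 and weights w_i ≥ 0, let 0 < ℓ ≤ u, and assume the critical value v̂ satisfies ℓ ≤ v̂ ≤ u, where W := Σ_{i : v_i > v̂} w_i < 1 ≤ W + Σ_{i : v_i = v̂} w_i. Then there exists an allocation z with 0 ≤ z_i ≤ w_i, z_i = 0 for every item with v_i ∉ [ℓ, u], and Σ_i z_i ≤ 1, such that Σ_{i : v_i > v̂} v_i w_i + v̂·(1 − W) ≤ Σ_{i : v_i > u} v_i w_i + Σ_i v_i z_i. That is, the offline optimal profit of the full instance is at most the total value of all items above u plus the offline optimal profit of the instance restricted to items with values in [ℓ, u]. -/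
open Finset

/-- The offline optimum of the full instance is at most the total value of
items above `u` plus the profit of some feasible allocation supported on
items with values in `[ℓ, u]`. -/
theorem stmt7 (n : ℕ) (v w : Fin n → ℝ) (ℓ u vhat : ℝ)
    (hv : ∀ i, 0 < v i) (hw : ∀ i, 0 ≤ w i)
    (hℓ : 0 < ℓ) (hℓu : ℓ ≤ u)
    (hℓv : ℓ ≤ vhat) (hvu : vhat ≤ u)
    (W : ℝ)
    (hWdef : W = ∑ i ∈ Finset.univ.filter (fun i => vhat < v i), w i)
    (hW1 : W < 1)
    (hW2 : 1 ≤ W + ∑ i ∈ Finset.univ.filter (fun i => v i = vhat), w i) :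
    ∃ z : Fin n → ℝ,
      (∀ i, 0 ≤ z i ∧ z i ≤ w i) ∧
      (∀ i, (v i < ℓ ∨ u < v i) → z i = 0) ∧
      (∑ i, z i ≤ 1) ∧
      (∑ i ∈ Finset.univ.filter (fun i => vhat < v i), v i * w i) + vhat * (1 - W)
        ≤ (∑ i ∈ Finset.univ.filter (fun i => u < v i), v i * w i) + ∑ i, v i * z i := by
  set S : ℝ := ∑ i ∈ Finset.univ.filter (fun i => v i = vhat), w i with hS
  have hSpos : 0 < S := by linarith
  obtain ⟨c, hc⟩ : ∃ c : ℝ, c = (1 - W) / S := ⟨_, rfl⟩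
  have hcS : c * S = 1 - W := by rw [hc]; field_simp
  have hc0 : 0 ≤ c := by rw [hc]; apply div_nonneg <;> linarith
  have hc1 : c ≤ 1 := by rw [hc, div_le_one hSpos]; linarith
  rw [Finset.sum_filter] at hWdef hS
  refine ⟨fun i => if vhat < v i ∧ v i ≤ u then w i else if v i = vhat then c * w i else 0,
    ?_, ?_, ?_, ?_⟩
  · intro i
    have h1 := hw i
    have h2 : 0 ≤ c * w i := mul_nonneg hc0 h1
    have h3 : c * w i ≤ w i := mul_le_of_le_one_left h1 hc1
    dsimp only
    split_ifs <;> constructor <;> linarith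
  · intro i hi
    have h1 : ¬ (vhat < v i ∧ v i ≤ u) := by
      rintro ⟨h, h'⟩
      rcases hi with hi | hi <;> linarith
    have h2 : ¬ (v i = vhat) := by
      intro h
      rcases hi with hi | hi <;> linarith
    simp only [if_neg h1, if_neg h2]
  · have key : W + c * S = 1 := by linarith
    rw [← key, hWdef, hS, Finset.mul_sum, ← Finset.sum_add_distrib]
    apply Finset.sum_le_sum
    intro i _
    have h1 := hw i
    have h2 : 0 ≤ c * w i := mul_nonneg hc0 h1
    by_cases ha : vhat < v i
    · have hb : ¬ (v i = vhat) := ne_of_gt ha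
      simp only [ha, hb, true_and, if_true, if_false]
      split_ifs <;> linarith
    · simp only [ha, false_and, if_false]
      split_ifs <;> linarith
  · rw [← hcS, hS, Finset.sum_filter, Finset.sum_filter, Finset.mul_sum, Finset.mul_sum,
      ← Finset.sum_add_distrib, ← Finset.sum_add_distrib]
    apply Finset.sum_le_sum
    intro i _
    rcases lt_trichotomy vhat (v i) with ha | ha | ha
    · have hb : ¬ (v i = vhat) := ne_of_gt ha
      by_cases hu : u < v i
      · simp [ha, hb, hu, not_le.mpr hu]
      · simp [ha, hb, hu, not_lt.mp hu]
    · have hu : ¬ (u < v i) := by linarith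
      have hb : v i = vhat := ha.symm
      rw [hb] at hu
      simp [hb, hu]
    · have hb : ¬ (v i = vhat) := ne_of_lt ha
      have hu : ¬ (u < v i) := by linarith
      have hd : ¬ (vhat < v i) := by linarith
      simp [hb, hu, hd]
end

section
/- Let 0 < L ≤ U and γ > 0, and let g : ℝ → ℝ be nondecreasing on [L, U]. If for every x ∈ [L, U], g(x) ≥ 1/γ + (1/x)·∫_L^x g(t) dt, then for every x ∈ [L, U], g(x) ≥ (1/γ)·(1 + ln(x/L)). -/
/-- Grönwall-type inequality underlying the robustness constraint for online
knapsack: if `g` is nondecreasing on `[L, U]` and satisfies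
`g x ≥ 1/γ + (1/x) ∫_L^x g`, then `g x ≥ (1/γ)(1 + ln(x/L))` on `[L, U]`. -/
theorem stmt11 (L U γ : ℝ) (g : ℝ → ℝ)
    (hL : 0 < L) (hLU : L ≤ U) (hγ : 0 < γ)
    (hmono : MonotoneOn g (Set.Icc L U))
    (h : ∀ x ∈ Set.Icc L U, 1 / γ + (1 / x) * (∫ t in L..x, g t) ≤ g x) :
    ∀ x ∈ Set.Icc L U, (1 / γ) * (1 + Real.log (x / L)) ≤ g x := by
  have hint : ∀ a ∈ Set.Icc L U, ∀ b ∈ Set.Icc L U,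
      IntervalIntegrable g MeasureTheory.volume a b := by
    intro a ha b hb
    apply MonotoneOn.intervalIntegrable
    apply hmono.mono
    exact Set.uIcc_subset_Icc ha hb
  have hLm : L ∈ Set.Icc L U := ⟨le_rfl, hLU⟩
  have hUm : U ∈ Set.Icc L U := ⟨hLU, le_rfl⟩
  have hcont : ContinuousOn (fun x => ∫ t in L..x, g t) (Set.Icc L U) := by
    have := intervalIntegral.continuousOn_primitive_interval' (hint L hLm U hUm)
      (a := L) Set.left_mem_uIcc
    rwa [Set.uIcc_of_le hLU] at this
  have hne : ∀ x ∈ Set.Icc L U, x ≠ 0 := fun x hx => (hL.trans_le hx.1).ne'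
  have hB' : ∀ x ∈ Set.Icc L U,
      HasDerivAt (fun x : ℝ => -(1 / γ * Real.log (x / L))) (-(1 / γ * (1 / x))) x := by
    intro x hx
    have hx0 := hne x hx
    have h1 := ((((hasDerivAt_id x).div_const L).log
      (div_ne_zero hx0 hL.ne')).const_mul (1 / γ)).neg
    refine h1.congr_deriv ?_
    simp only [id]
    field_simp
  have key := image_le_of_liminf_slope_right_le_deriv_boundary (a := L) (b := U)
    (f := fun x => -((∫ t in L..x, g t) / x))
    (B := fun x : ℝ => -(1 / γ * Real.log (x / L))) (B' := fun x => -(1 / γ * (1 / x)))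
    ((hcont.div continuousOn_id hne).neg)
    (by simp [hL.ne'])
    (fun x hx => (hB' x hx).continuousAt.continuousWithinAt)
    (fun x hx => (hB' x ⟨hx.1, hx.2.le⟩).hasDerivWithinAt)
    (by
      intro x hx r hr
      have hxm : x ∈ Set.Icc L U := ⟨hx.1, hx.2.le⟩
      have hx0 : 0 < x := hL.trans_le hx.1
      apply Filter.Eventually.frequently
      have hc : ContinuousAt (fun z : ℝ => -(1 / γ * (1 / z))) x := by
        have := hx0.ne'
        fun_prop (disch := assumption)
      have e1 : ∀ᶠ z in nhdsWithin x (Set.Ioi x), -(1 / γ * (1 / z)) < r :=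
        (hc.eventually_lt_const hr).filter_mono nhdsWithin_le_nhds
      filter_upwards [e1, Ioo_mem_nhdsGT hx.2] with z hz hzm
      refine lt_of_le_of_lt ?_ hz
      have hzI : z ∈ Set.Icc L U := ⟨hx.1.trans hzm.1.le, hzm.2.le⟩
      have hz0 : 0 < z := hx0.trans hzm.1
      have hd : 0 < z - x := sub_pos.2 hzm.1
      have hadd := intervalIntegral.integral_add_adjacent_intervals
        (hint L hLm x hxm) (hint x hxm z hzI)
      have hge : (z - x) * g x ≤ ∫ t in x..z, g t := by
        have := intervalIntegral.integral_mono_on hzm.1.le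
          (intervalIntegrable_const (c := g x)) (hint x hxm z hzI)
          (fun t ht => hmono hxm ⟨hx.1.trans ht.1, ht.2.trans hzm.2.le⟩ ht.1)
        simpa using this
      have hg := mul_le_mul_of_nonneg_left (h x hxm) hd.le
      rw [slope_def_field]
      rw [← hadd]
      generalize (∫ t in L..x, g t) = G at *
      generalize (∫ t in x..z, g t) = H at *
      have hH := hg.trans hge
      rw [div_le_iff₀ hd]
      have e : (G + (z - x) * (1 / γ + 1 / x * G)) / z = G / x + 1 / γ * (1 / z) * (z - x) := by
        field_simp
        ring
      have : (G + (z - x) * (1 / γ + 1 / x * G)) / z ≤ (G + H) / z := by gcongr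
      linarith)
  intro x hx
  have k := key hx
  have hh := h x hx
  have e : 1 / x * (∫ t in L..x, g t) = (∫ t in L..x, g t) / x := by ring
  linarith
end

section
/- Let 0 < L < U, let γ ≥ 1 + ln(U/L), let η > 0, and let g : ℝ → ℝ be nondecreasing on [L, U] with 0 ≤ g(x) ≤ 1 for x ∈ [L, U] and g(U) = 1. Suppose that for every x ∈ [L, U], g(x) ≥ (1/γ)·(1 + ln(x/L)) and g(x) ≥ 1/η, and that U·g(U) − ∫_L^U g(t) dt ≥ U/η. Then η ≥ max{ 2 − L/U, 1/(1 − ln(U/L)/γ) }. (Interpretation: g is the acceptance function of any deterministic γ-robust, η-consistent learning-augmented online knapsack algorithm given an untrusted prediction of the critical value, evaluated on continuously non-decreasing instances; hence any γ-robust algorithm with γ ∈ [ln(U/L)+1, ∞) is at least max{2 − L/U, 1/(1 − ln(U/L)/γ)}-consistent.) -/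
/-- Lower bound on the consistency of any γ-robust learning-augmented online
knapsack algorithm given an untrusted prediction of the critical value:
`η ≥ max { 2 − L/U , 1/(1 − ln(U/L)/γ) }`. -/
theorem stmt12 (L U γ η : ℝ) (g : ℝ → ℝ)
    (hL : 0 < L) (hLU : L < U)
    (hγ : 1 + Real.log (U / L) ≤ γ) (hη : 0 < η)
    (hmono : MonotoneOn g (Set.Icc L U))
    (hg01 : ∀ x ∈ Set.Icc L U, 0 ≤ g x ∧ g x ≤ 1)
    (hgU : g U = 1)
    (hrob : ∀ x ∈ Set.Icc L U, (1 / γ) * (1 + Real.log (x / L)) ≤ g x)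
    (hcons : ∀ x ∈ Set.Icc L U, 1 / η ≤ g x)
    (hconsU : U / η ≤ U * g U - ∫ t in L..U, g t) :
    max (2 - L / U) (1 / (1 - Real.log (U / L) / γ)) ≤ η := by
  have hU : 0 < U := hL.trans hLU
  have hgi : IntervalIntegrable g MeasureTheory.volume L U := by
    apply MonotoneOn.intervalIntegrable
    rwa [Set.uIcc_of_le hLU.le]
  have h1 : (U - L) * (1 / η) ≤ ∫ t in L..U, g t := by
    have := intervalIntegral.integral_mono_on hLU.le
      (intervalIntegrable_const (c := 1 / η)) hgi hcons
    simpa using this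
  have hlog : 0 < Real.log (U / L) := Real.log_pos ((one_lt_div hL).2 hLU)
  have hγ0 : 0 < γ := by linarith
  have hcont : ContinuousOn (fun x : ℝ => (1 / γ) * (1 + Real.log (x / L))) (Set.uIcc L U) := by
    rw [Set.uIcc_of_le hLU.le]
    refine continuousOn_const.mul (continuousOn_const.add
      (ContinuousOn.log (continuousOn_id.div_const L) ?_))
    intro x hx
    exact (div_pos (hL.trans_le hx.1) hL).ne'
  have h2 : (1 / γ) * (U * Real.log (U / L)) ≤ ∫ t in L..U, g t := by
    have h := intervalIntegral.integral_mono_on hLU.le hcont.intervalIntegrable hgi hrob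
    have e := intervalIntegral.integral_eq_sub_of_hasDerivAt
      (f := fun x : ℝ => (1 / γ) * (x * Real.log (x / L)))
      (f' := fun x : ℝ => (1 / γ) * (1 + Real.log (x / L))) (a := L) (b := U) (by
        intro x hx
        rw [Set.uIcc_of_le hLU.le] at hx
        have hx0 : 0 < x := hL.trans_le hx.1
        have d := (((hasDerivAt_id x).mul
          (((hasDerivAt_id x).div_const L).log (div_pos hx0 hL).ne')).const_mul (1 / γ))
        refine HasDerivAt.congr_deriv (f := fun x : ℝ => (1 / γ) * (x * Real.log (x / L))) d ?_
        simp only [id]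
        field_simp
        ring) hcont.intervalIntegrable
    rw [e] at h
    simpa [div_self hL.ne'] using h
  rw [hgU] at hconsU
  apply max_le
  · have h3 : U / η ≤ U - (U - L) * (1 / η) := by linarith
    have h4 : U ≤ U * η - (U - L) := by
      have := mul_le_mul_of_nonneg_right h3 hη.le
      field_simp at this
      linarith
    have : 2 - L / U = (2 * U - L) / U := by field_simp
    rw [this, div_le_iff₀ hU]
    linarith
  · have h3 : U * (1 / η) ≤ U * (1 - Real.log (U / L) / γ) := by
      have a : U * (1 / η) = U / η := by ring
      have b : U * (1 - Real.log (U / L) / γ) = U - (1 / γ) * (U * Real.log (U / L)) := by ring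
      rw [a, b]
      linarith
    have h4 := le_of_mul_le_mul_left h3 hU
    have h5 := one_div_le_one_div_of_le (one_div_pos.2 hη) h4
    rwa [one_div_one_div] at h5
end

section
/- Let c ∈ [0, 1] and let p, q : ℕ → ℝ satisfy 0 ≤ p(i) ≤ q(i) for all i. Define sequences r and a by r(0) = a(0) = 0, r(i+1) = r(i) + p(i), and a(i+1) = a(i) + q(i) if a(i) < c·r(i+1), while a(i+1) = a(i) otherwise. Then a(i) ≥ c·r(i) for every i. -/
/-- Induction lemma behind the CONV fractional-to-integral conversion: the
integrally accepted value `a` always stays at least `c` times the simulated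
fractional value `r`. -/
theorem stmt13 (c : ℝ) (hc0 : 0 ≤ c) (hc1 : c ≤ 1) (p q : ℕ → ℝ)
    (hpq : ∀ i, 0 ≤ p i ∧ p i ≤ q i)
    (r a : ℕ → ℝ) (hr0 : r 0 = 0) (ha0 : a 0 = 0)
    (hr : ∀ i, r (i + 1) = r i + p i)
    (ha : ∀ i, a (i + 1) = if a i < c * r (i + 1) then a i + q i else a i) :
    ∀ i, c * r i ≤ a i := by
  intro i
  induction i with
  | zero => simp [hr0, ha0]
  | succ k ih =>
    rw [ha k]
    split_ifs with h
    · rw [hr k]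
      obtain ⟨h0, h1⟩ := hpq k
      have h2 : c * p k ≤ p k := mul_le_of_le_one_left h0 hc1
      rw [mul_add]
      linarith
    · exact not_lt.mp h
end

section
/- In the CONV setup, the total value accepted by CONV satisfies Σ_{i accepted} v_i·w_i ≥ c·Σ_{i=1}^n v_i·x̃_i, where c = (1 − ε(K+1))/(1+δ). Consequently, if the simulated fractional solution is γ-competitive against a target profit P, i.e., γ·Σ_{i=1}^n v_i·x̃_i ≥ P, then CONV's integral profit is at least P·(1 − ε(K+1))/(γ·(1+δ)). -/
open Finset

/-- In the CONV setup, the total value accepted by CONV is at least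
`c = (1 − ε(K+1))/(1+δ)` times the value of the simulated fractional solution;
consequently, if the fractional solution is γ-competitive against a target
profit `P`, CONV's integral profit is at least `P(1 − ε(K+1))/(γ(1+δ))`. -/
theorem stmt14 (n K : ℕ) (L δ ε c : ℝ)
    (hL : 0 < L) (hδ : 0 < δ) (hε : 0 < ε) (hεK : ε * (K + 1) ≤ 1)
    (hc : c = (1 - ε * (K + 1)) / (1 + δ))
    (j : ℕ → ℕ) (v w xt : ℕ → ℝ)
    (hj : ∀ i < n, j i ≤ K)
    (hv : ∀ i < n, L * (1 + δ) ^ (j i) / (1 + δ) < v i ∧ v i ≤ L * (1 + δ) ^ (j i))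
    (hw : ∀ i < n, 0 ≤ w i ∧ w i ≤ ε)
    (hxt : ∀ i < n, 0 ≤ xt i ∧ xt i ≤ w i)
    (hsum : ∑ i ∈ Finset.range n, xt i ≤ 1)
    (A R : ℕ → ℕ → ℝ)
    (hR0 : ∀ k, R 0 k = 0) (hA0 : ∀ k, A 0 k = 0)
    (hRrec : ∀ i k, R (i + 1) k = R i k + (if k = j i then v i * xt i else 0))
    (hArec : ∀ i k, A (i + 1) k =
      A i k + (if A i (j i) < c * R (i + 1) (j i) ∧ k = j i then v i * w i else 0)) :
    (c * ∑ i ∈ Finset.range n, v i * xt i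
        ≤ ∑ i ∈ Finset.range n,
            (if A i (j i) < c * R (i + 1) (j i) then v i * w i else 0)) ∧
    (∀ γ P : ℝ, 0 < γ → P ≤ γ * ∑ i ∈ Finset.range n, v i * xt i →
      P * (1 - ε * (K + 1)) / (γ * (1 + δ))
        ≤ ∑ i ∈ Finset.range n,
            (if A i (j i) < c * R (i + 1) (j i) then v i * w i else 0)) := by
  have h1δ : 0 < 1 + δ := by linarith
  have hc1 : c ≤ 1 := by
    rw [hc, div_le_one h1δ]
    have : 0 ≤ ε * ((K : ℝ) + 1) := by positivity
    linarith
  have hc0 : 0 ≤ c := by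
    rw [hc]
    exact div_nonneg (by linarith) h1δ.le
  have hv0 : ∀ i < n, 0 ≤ v i := fun i hi =>
    le_trans (by positivity) (hv i hi).1.le
  have inv : ∀ m, m ≤ n → ∀ k, c * R m k ≤ A m k := by
    intro m
    induction m with
    | zero => intro _ k; simp [hR0, hA0]
    | succ m ih =>
      intro hm k
      have hm' : m < n := hm
      have ihk := ih hm'.le k
      rw [hArec]
      by_cases hk : k = j m
      · subst hk
        by_cases ha : A m (j m) < c * R (m + 1) (j m)
        · rw [if_pos ⟨ha, rfl⟩, hRrec, if_pos rfl]
          have h1 : v m * xt m ≤ v m * w m :=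
            mul_le_mul_of_nonneg_left (hxt m hm').2 (hv0 m hm')
          have h2 : 0 ≤ v m * xt m := mul_nonneg (hv0 m hm') (hxt m hm').1
          nlinarith
        · rw [if_neg (fun h => ha h.1)]
          linarith
      · rw [if_neg (fun h => hk h.2), hRrec, if_neg hk]
        simpa using ihk
  have sR : ∀ m, m ≤ n → ∑ k ∈ Finset.range (K + 1), R m k
      = ∑ i ∈ Finset.range m, v i * xt i := by
    intro m
    induction m with
    | zero => intro _; simp [hR0]
    | succ m ih =>
      intro hm
      have hjm : j m < K + 1 := Nat.lt_succ_of_le (hj m hm)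
      rw [Finset.sum_range_succ _ m, ← ih (Nat.le_of_succ_le hm)]
      simp only [hRrec, Finset.sum_add_distrib]
      rw [Finset.sum_ite_eq' (Finset.range (K + 1)) (j m), if_pos (Finset.mem_range.2 hjm)]
  have sA : ∀ m, m ≤ n → ∑ k ∈ Finset.range (K + 1), A m k
      = ∑ i ∈ Finset.range m, (if A i (j i) < c * R (i + 1) (j i) then v i * w i else 0) := by
    intro m
    induction m with
    | zero => intro _; simp [hA0]
    | succ m ih =>
      intro hm
      have hjm : j m < K + 1 := Nat.lt_succ_of_le (hj m hm)
      rw [Finset.sum_range_succ _ m, ← ih (Nat.le_of_succ_le hm)]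
      rw [Finset.sum_congr rfl (fun k _ => hArec m k), Finset.sum_add_distrib]
      congr 1
      by_cases ha : A m (j m) < c * R (m + 1) (j m)
      · simp only [ha, true_and, if_true]
        rw [Finset.sum_ite_eq' (Finset.range (K + 1)) (j m), if_pos (Finset.mem_range.2 hjm)]
      · simp [ha]
  have main : c * ∑ i ∈ Finset.range n, v i * xt i
        ≤ ∑ i ∈ Finset.range n,
            (if A i (j i) < c * R (i + 1) (j i) then v i * w i else 0) := by
    rw [← sA n le_rfl, ← sR n le_rfl, Finset.mul_sum]
    exact Finset.sum_le_sum fun k _ => inv n le_rfl k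
  refine ⟨main, fun γ P hγ hP => le_trans ?_ main⟩
  have e : P * (1 - ε * (K + 1)) / (γ * (1 + δ)) = c * (P / γ) := by
    rw [hc]; field_simp
  rw [e]
  apply mul_le_mul_of_nonneg_left _ hc0
  rw [div_le_iff₀ hγ]
  linarith
end

section
/- In the CONV setup, the total weight accepted by CONV is feasible: Σ_{i accepted} w_i ≤ ε·(K+1) + (1 − ε(K+1))·Σ_{i=1}^n x̃_i ≤ 1. -/
open Finset

/-- In the CONV setup, the total weight accepted by CONV is feasible:
it is at most `ε(K+1) + (1 − ε(K+1))·Σ x̃ ≤ 1`. -/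
theorem stmt15 (n K : ℕ) (L δ ε c : ℝ)
    (hL : 0 < L) (hδ : 0 < δ) (hε : 0 < ε) (hεK : ε * (K + 1) ≤ 1)
    (hc : c = (1 - ε * (K + 1)) / (1 + δ))
    (j : ℕ → ℕ) (v w xt : ℕ → ℝ)
    (hj : ∀ i < n, j i ≤ K)
    (hv : ∀ i < n, L * (1 + δ) ^ (j i) / (1 + δ) < v i ∧ v i ≤ L * (1 + δ) ^ (j i))
    (hw : ∀ i < n, 0 ≤ w i ∧ w i ≤ ε)
    (hxt : ∀ i < n, 0 ≤ xt i ∧ xt i ≤ w i)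
    (hsum : ∑ i ∈ Finset.range n, xt i ≤ 1)
    (A R : ℕ → ℕ → ℝ)
    (hR0 : ∀ k, R 0 k = 0) (hA0 : ∀ k, A 0 k = 0)
    (hRrec : ∀ i k, R (i + 1) k = R i k + (if k = j i then v i * xt i else 0))
    (hArec : ∀ i k, A (i + 1) k =
      A i k + (if A i (j i) < c * R (i + 1) (j i) ∧ k = j i then v i * w i else 0)) :
    (∑ i ∈ Finset.range n, (if A i (j i) < c * R (i + 1) (j i) then w i else 0)
        ≤ ε * (K + 1) + (1 - ε * (K + 1)) * ∑ i ∈ Finset.range n, xt i) ∧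
    (ε * (K + 1) + (1 - ε * (K + 1)) * ∑ i ∈ Finset.range n, xt i ≤ 1) := by
  have hd : 0 < 1 + δ := by linarith
  obtain ⟨g, hg⟩ : ∃ g, g = 1 - ε * ((K : ℝ) + 1) := ⟨_, rfl⟩
  have hg0 : 0 ≤ g := by rw [hg]; linarith
  rw [← hg] at hc ⊢
  have hc0 : 0 ≤ c := by rw [hc]; positivity
  refine ⟨?_, by nlinarith⟩
  have key : ∀ k, ∀ m ≤ n,
      L * (1 + δ) ^ k / (1 + δ) * (∑ i ∈ Finset.range m,
        (if k = j i then (if A i (j i) < c * R (i + 1) (j i) then w i else 0) else 0)) ≤ A m k ∧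
      R m k ≤ L * (1 + δ) ^ k * (∑ i ∈ Finset.range m, (if k = j i then xt i else 0)) ∧
      (∑ i ∈ Finset.range m,
        (if k = j i then (if A i (j i) < c * R (i + 1) (j i) then w i else 0) else 0)) ≤
        ε + g * (∑ i ∈ Finset.range m, (if k = j i then xt i else 0)) := by
    intro k m
    induction m with
    | zero => intro _; simp [hR0, hA0, hε.le]
    | succ m ih =>
      intro hm
      obtain ⟨h1, h2, h3⟩ := ih (by omega)
      obtain ⟨hv1, hv2⟩ := hv m (by omega)
      obtain ⟨hw1, hw2⟩ := hw m (by omega)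
      obtain ⟨hx1, hx2⟩ := hxt m (by omega)
      rw [Finset.sum_range_succ, Finset.sum_range_succ]
      generalize (∑ i ∈ Finset.range m,
        (if k = j i then (if A i (j i) < c * R (i + 1) (j i) then w i else 0) else 0)) = W at *
      generalize (∑ i ∈ Finset.range m, (if k = j i then xt i else 0)) = X at *
      by_cases hk : k = j m
      · subst hk
        have hl : 0 < L * (1 + δ) ^ (j m) / (1 + δ) := by positivity
        have hcl : c * (L * (1 + δ) ^ (j m)) = g * (L * (1 + δ) ^ (j m) / (1 + δ)) := by
          rw [hc]; ring
        have hR' := hRrec m (j m)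
        have hA' := hArec m (j m)
        simp only [and_true, if_true] at hR' hA' ⊢
        generalize L * (1 + δ) ^ (j m) / (1 + δ) = l at *
        generalize L * (1 + δ) ^ (j m) = U at *
        have hR2 : R (m + 1) (j m) ≤ U * (X + xt m) := by
          rw [hR']; nlinarith
        refine ⟨?_, hR2, ?_⟩
        · rw [hA']; split_ifs
          · nlinarith
          · linarith
        · split_ifs with hacc
          · have h5 : l * W ≤ l * (g * (X + xt m)) := by
              calc l * W ≤ c * R (m + 1) (j m) := by linarith
                _ ≤ c * (U * (X + xt m)) := mul_le_mul_of_nonneg_left hR2 hc0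
                _ = (c * U) * (X + xt m) := by ring
                _ = l * (g * (X + xt m)) := by rw [hcl]; ring
            have := le_of_mul_le_mul_left h5 hl
            linarith
          · nlinarith
      · have hR' := hRrec m k
        have hA' := hArec m k
        simp only [hk, and_false, if_false, add_zero] at hR' hA' ⊢
        rw [hR', hA']
        exact ⟨h1, h2, h3⟩
  have sw : ∀ f : ℕ → ℝ, ∑ i ∈ Finset.range n, f i =
      ∑ k ∈ Finset.range (K + 1), ∑ i ∈ Finset.range n, (if k = j i then f i else 0) := by
    intro f
    rw [Finset.sum_comm]
    refine Finset.sum_congr rfl fun i hi => ?_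
    have := hj i (Finset.mem_range.mp hi)
    rw [Finset.sum_ite_eq', if_pos (Finset.mem_range.mpr (by omega))]
  rw [sw, sw xt]
  refine (Finset.sum_le_sum fun k _ => (key k n le_rfl).2.2).trans (le_of_eq ?_)
  rw [Finset.sum_add_distrib, Finset.mul_sum]
  simp
  ring
end

section
/- Fix d > 0, δ > 0, ε ≥ 0 and c ≥ 0 with c·(1+δ) ≤ 1. Items t = 1,…,m have unit values ρ_t ∈ [d, d·(1+δ)], weights ω_t ∈ [0, ε], and fractional amounts u_t ∈ [0, ω_t]. Define R_t = Σ_{s ≤ t} ρ_s·u_s and process the items in order with A_0 = 0: item t is accepted iff A_{t−1} < c·R_t, and A_t = A_{t−1} + ρ_t·ω_t if t is accepted, A_t = A_{t−1} otherwise. Then the total accepted weight satisfies Σ_{t accepted} ω_t ≤ ε + c·(1+δ)·Σ_{t=1}^m u_t. -/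
open Finset

/-- Per-range weight bound for the CONV conversion: within a single value
range (values between `d` and `d(1+δ)`), the total weight of items accepted
integrally is at most `ε + c(1+δ)` times the total fractional amount. -/
theorem stmt16 (d δ ε c : ℝ) (hd : 0 < d) (hδ : 0 < δ) (hε : 0 ≤ ε) (hc : 0 ≤ c)
    (hcδ : c * (1 + δ) ≤ 1)
    (m : ℕ) (ρ ω u : ℕ → ℝ)
    (hρ : ∀ t < m, d ≤ ρ t ∧ ρ t ≤ d * (1 + δ))
    (hω : ∀ t < m, 0 ≤ ω t ∧ ω t ≤ ε)
    (hu : ∀ t < m, 0 ≤ u t ∧ u t ≤ ω t)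
    (A : ℕ → ℝ) (hA0 : A 0 = 0)
    (hArec : ∀ t, A (t + 1) =
      if A t < c * ∑ s ∈ Finset.range (t + 1), ρ s * u s then A t + ρ t * ω t else A t) :
    ∑ t ∈ Finset.range m,
        (if A t < c * ∑ s ∈ Finset.range (t + 1), ρ s * u s then ω t else 0)
      ≤ ε + c * (1 + δ) * ∑ t ∈ Finset.range m, u t := by
  have key : ∀ n ≤ m,
      d * (∑ t ∈ Finset.range n,
        (if A t < c * ∑ s ∈ Finset.range (t + 1), ρ s * u s then ω t else 0)) ≤ A n ∧
      (∑ s ∈ Finset.range n, ρ s * u s) ≤ d * (1 + δ) * ∑ t ∈ Finset.range n, u t ∧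
      ∑ t ∈ Finset.range n,
        (if A t < c * ∑ s ∈ Finset.range (t + 1), ρ s * u s then ω t else 0)
      ≤ ε + c * (1 + δ) * ∑ t ∈ Finset.range n, u t := by
    intro n
    induction n with
    | zero => intro _; simp [hA0, hε]
    | succ n ih =>
      intro hn
      obtain ⟨h1, h2, h3⟩ := ih (by omega)
      obtain ⟨r1, r2⟩ := hρ n (by omega)
      obtain ⟨w1, w2⟩ := hω n (by omega)
      obtain ⟨u1, u2⟩ := hu n (by omega)
      have hR : (∑ s ∈ Finset.range (n + 1), ρ s * u s)
          ≤ d * (1 + δ) * ∑ t ∈ Finset.range (n + 1), u t := by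
        rw [Finset.sum_range_succ, Finset.sum_range_succ, mul_add]
        exact add_le_add h2 (mul_le_mul_of_nonneg_right r2 u1)
      have hcR := mul_le_mul_of_nonneg_left hR hc
      have hcu : 0 ≤ c * (1 + δ) * u n := by positivity
      have hrw : d * ω n ≤ ρ n * ω n := mul_le_mul_of_nonneg_right r1 w1
      rw [hArec n, Finset.sum_range_succ (fun t => if A t < c * ∑ s ∈ Finset.range (t + 1), ρ s * u s then ω t else 0)]
      refine ⟨?_, hR, ?_⟩
      · split_ifs <;> linarith
      · split_ifs with h
        · generalize (∑ t ∈ Finset.range n,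
            (if A t < c * ∑ s ∈ Finset.range (t + 1), ρ s * u s then ω t else 0)) = W at *
          have : W ≤ c * (1 + δ) * ∑ t ∈ Finset.range (n + 1), u t := by
            refine le_of_mul_le_mul_left ?_ hd
            linarith
          linarith
        · rw [Finset.sum_range_succ, mul_add]
          linarith
  exact (key m le_rfl).2.2
end

section
/- Let 0 < L < U and ε ∈ (0,1), and consider the two-item fractional knapsack instance (v₁, w₁) = (L, 1), (v₂, w₂) = (U, 1 − ε). The critical value of this instance is L; the naive prediction-following algorithm PP-n, which greedily fully accepts every item of unit value at least the predicted critical value L until capacity 1 is filled, accepts all of the first item and earns profit exactly L, while the allocation z₁ = ε, z₂ = 1 − ε is feasible with profit (1 − ε)·U + ε·L ≤ OPT. Consequently, for every c < U/L there exists ε ∈ (0,1) with ((1 − ε)·U + ε·L)/L > c; hence PP-n's worst-case competitive ratio is at least U/L even with a correct point prediction of the critical value. -/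
open Finset

/-- The naive prediction-following algorithm PP-n has worst-case competitive
ratio at least `U/L`, even with a correct point prediction of the critical
value: on the two-item instance `(L, 1), (U, 1−ε)` the critical value is `L`,
PP-n earns exactly `L`, yet the feasible allocation `(ε, 1−ε)` earns
`(1−ε)U + εL ≤ OPT`, and `((1−ε)U + εL)/L` exceeds any `c < U/L` for suitable
`ε ∈ (0,1)`. -/
theorem stmt17 (L U ε : ℝ) (hL : 0 < L) (hLU : L < U) (hε0 : 0 < ε) (hε1 : ε < 1)
    (v w : Fin 2 → ℝ) (hv : v = ![L, U]) (hw : w = ![1, 1 - ε])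
    (ppn OPT : ℝ)
    (hppn : ppn = v 0 * min (w 0) 1 + v 1 * min (w 1) (1 - min (w 0) 1))
    (hOPT : IsGreatest {p : ℝ | ∃ y : Fin 2 → ℝ,
      (∀ i, 0 ≤ y i ∧ y i ≤ w i) ∧ y 0 + y 1 ≤ 1 ∧ p = v 0 * y 0 + v 1 * y 1} OPT) :
    (IsLeast {x : ℝ | (∃ i, v i = x) ∧
        ∑ i ∈ Finset.univ.filter (fun i => x < v i), w i < 1} L) ∧
    ppn = L ∧
    ((∀ i : Fin 2, 0 ≤ (![ε, 1 - ε] : Fin 2 → ℝ) i ∧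
        (![ε, 1 - ε] : Fin 2 → ℝ) i ≤ w i) ∧
      ε + (1 - ε) ≤ 1 ∧ (1 - ε) * U + ε * L ≤ OPT) ∧
    (∀ c : ℝ, c < U / L → ∃ ε' : ℝ, 0 < ε' ∧ ε' < 1 ∧
      c < ((1 - ε') * U + ε' * L) / L) := by
  subst hv hw
  refine ⟨⟨⟨⟨0, by simp⟩, ?_⟩, ?_⟩, ?_, ⟨?_, by linarith, ?_⟩, ?_⟩
  · rw [Finset.sum_filter, Fin.sum_univ_two]
    simp [hLU, hε0]
  · rintro x ⟨⟨i, rfl⟩, -⟩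
    fin_cases i
    · simp
    · simpa using hLU.le
  · rw [hppn]
    simp [hε1.le]
  · intro i
    fin_cases i
    · simp [hε0.le, hε1.le]
    · simp [hε1.le]
  · apply hOPT.2
    refine ⟨![ε, 1 - ε], ?_, ?_, ?_⟩
    · intro i
      fin_cases i
      · simp [hε0.le, hε1.le]
      · simp [hε1.le]
    · simp
    · simp
      ring
  · intro c hc
    rw [lt_div_iff₀ hL] at hc
    have hd : 0 < U - L := sub_pos.mpr hLU
    have hn : 0 < U - c * L := sub_pos.mpr hc
    refine ⟨min (1 / 2) ((U - c * L) / (2 * (U - L))), by positivity,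
      lt_of_le_of_lt (min_le_left _ _) (by norm_num), ?_⟩
    rw [lt_div_iff₀ hL]
    have h := min_le_right (1 / 2 : ℝ) ((U - c * L) / (2 * (U - L)))
    rw [le_div_iff₀ (by positivity)] at h
    nlinarith
end

section
/- Let c ≥ 1 and let N be an integer with N > c; set κ = 1/N. Consider the items: a batch of N 'small' items, each of unit value 1 and weight κ, followed by 'big' items k = 1, …, N−1, where big item k has weight κ and total value c·(c+1)^{k−1}. For 1 ≤ i ≤ N let instance I_i consist of the small batch followed by big items 1,…,i−1; then OPT(I₁) = 1 and OPT(I_i) = (c+1)^{i−1} − (i−1)·κ for 2 ≤ i ≤ N (with knapsack capacity 1 and integral acceptance). Then there do not exist a ∈ {0, 1, …, N} (the number of small items accepted) and a set T ⊆ {1, …, N−1} (the big items accepted) such that all of the following hold: (feasibility) κ·a + κ·|T| ≤ 1; (c-competitiveness on I₁) 1 ≤ c·κ·a; and (c-competitiveness on I_i for each 2 ≤ i ≤ N) (c+1)^{i−1} − (i−1)·κ ≤ c·( κ·a + Σ_{k ∈ T, k ≤ i−1} c·(c+1)^{k−1} ). Hence, under the small-weight assumption alone (without bounded values), no deterministic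 algorithm for online integral knapsack is c-competitive on all these instances, even given a correct critical-value prediction. -/
open Finset

theorem geo_aux (c : ℝ) (m : ℕ) :
    ∑ k ∈ Finset.Icc 1 m, c * (c + 1) ^ (k - 1) = (c + 1) ^ m - 1 := by
  induction m with
  | zero => simp
  | succ n ih =>
    rw [Finset.sum_Icc_succ_top (by omega), ih]
    simp only [Nat.add_sub_cancel]
    ring

/-- Under the small-weight assumption alone (without bounded values), no
deterministic algorithm for online integral knapsack is `c`-competitive on
all the prefix instances `I_1, …, I_N`, even given a correct critical-value
prediction: there is no choice of `a` accepted small items and a set `T` of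
accepted big items that is feasible and `c`-competitive on every `I_i`. -/
theorem stmt19 (c : ℝ) (hc : 1 ≤ c) (N : ℕ) (hN : c < N) (κ : ℝ)
    (hκ : κ = 1 / (N : ℝ)) :
    ¬ ∃ (a : ℕ) (T : Finset ℕ), a ≤ N ∧ T ⊆ Finset.Icc 1 (N - 1) ∧
      κ * a + κ * T.card ≤ 1 ∧
      1 ≤ c * (κ * a) ∧
      (∀ i : ℕ, 2 ≤ i → i ≤ N →
        (c + 1) ^ (i - 1) - (i - 1 : ℕ) * κ
          ≤ c * (κ * a +
              ∑ k ∈ T.filter (fun k => k ≤ i - 1), c * (c + 1) ^ (k - 1))) := by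
  rintro ⟨a, T, haN, hT, hf, h1, hi⟩
  have hNpos : (0 : ℝ) < N := by linarith
  have hκN : κ * N = 1 := by rw [hκ]; field_simp
  have hκpos : 0 < κ := by rw [hκ]; positivity
  have hex : ∃ k ∈ Finset.Icc 1 (N - 1), k ∉ T := by
    by_contra! hcon
    have hTe : T = Finset.Icc 1 (N - 1) := Finset.Subset.antisymm hT hcon
    have hcard : T.card = N - 1 := by rw [hTe]; simp
    have hN1 : 1 ≤ N := by exact_mod_cast hNpos
    rw [hcard, Nat.cast_sub hN1] at hf
    push_cast at hf
    have ha : κ * a ≤ κ := by nlinarith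
    have h2 : c * (κ * a) ≤ c * κ := mul_le_mul_of_nonneg_left ha (by linarith)
    have h3 : κ * c < κ * N := mul_lt_mul_of_pos_left hN hκpos
    nlinarith
  obtain ⟨k, hk, hkT⟩ := hex
  rw [Finset.mem_Icc] at hk
  obtain ⟨m, rfl⟩ : ∃ m, k = m + 1 := ⟨k - 1, by omega⟩
  have h := hi (m + 2) (by omega) (by omega)
  have e : m + 2 - 1 = m + 1 := by omega
  rw [e] at h
  have hsum : ∑ k ∈ T.filter (fun k => k ≤ m + 1), c * (c + 1) ^ (k - 1)
      ≤ (c + 1) ^ m - 1 := by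
    rw [← geo_aux]
    apply Finset.sum_le_sum_of_subset_of_nonneg
    · intro j hj
      rw [Finset.mem_filter] at hj
      have hj1 := Finset.mem_Icc.mp (hT hj.1)
      have hne : j ≠ m + 1 := fun hh => hkT (hh ▸ hj.1)
      rw [Finset.mem_Icc]
      omega
    · intro j _ _
      positivity
  have ha1 : κ * a ≤ 1 := by
    have : 0 ≤ κ * (T.card : ℝ) := by positivity
    linarith
  have hrhs := mul_le_mul_of_nonneg_left (add_le_add ha1 hsum) (by linarith : (0 : ℝ) ≤ c)
  have hp : 1 ≤ (c + 1) ^ m := one_le_pow₀ (by linarith)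
  have hlt : ((m + 1 : ℕ) : ℝ) < N := by
    have : m + 1 < N := by omega
    exact_mod_cast this
  have hlt2 : κ * ((m + 1 : ℕ) : ℝ) < κ * N := mul_lt_mul_of_pos_left hlt hκpos
  rw [pow_succ] at h
  nlinarith
end
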